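/- arXiv:2605.21708 — 6 statements merged into one kernel-verified Lean document; each statement's English description precedes it below -/
import Mathlib

section
/- Let P : ℝ → Prop, let t ∈ ℝ, and let 0 ≤ t_{a,1} ≤ t_{b,1} and 0 ≤ t_{a,2} ≤ t_{b,2}. Then (∀ t₁ ∈ [t + t_{a,1}, t + t_{b,1}], ∀ t₂ ∈ [t₁ + t_{a,2}, t₁ + t_{b,2}], P t₂) if and only if (∀ s ∈ [t + t_{a,1} + t_{a,2}, t + t_{b,1} + t_{b,2}], P s). -/
open Set

section LinearOrderedAddCommMonoid

variable {α : Type*} [AddCommMonoid α] [LinearOrder α] [IsOrderedCancelAddMonoid α]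
  [ExistsAddOfLE α]

open scoped Pointwise in
theorem biUnion_Icc_add_Icc {a b c d : α} (hab : a ≤ b) (hcd : c ≤ d) :
    ⋃ x ∈ Icc a b, Icc (x + c) (x + d) = Icc (a + c) (b + d) :=
  calc
    ⋃ x ∈ Icc a b, Icc (x + c) (x + d) = ⋃ x ∈ Icc a b, (x + ·) '' Icc c d := by
      simp only [image_const_add_Icc]
    _ = Icc a b + Icc c d := iUnion_add_left_image
    _ = Icc (a + c) (b + d) := Icc_add_Icc hab hcd

theorem nested_always_iff_general (P : α → Prop) (t : α) {a₁ b₁ a₂ b₂ : α}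
    (h₁ : a₁ ≤ b₁) (h₂ : a₂ ≤ b₂) :
    (∀ t₁ ∈ Icc (t + a₁) (t + b₁), ∀ t₂ ∈ Icc (t₁ + a₂) (t₁ + b₂), P t₂) ↔
      ∀ s ∈ Icc (t + a₁ + a₂) (t + b₁ + b₂), P s := by
  have outer_le : t + a₁ ≤ t + b₁ := by gcongr
  rw [← biUnion_Icc_add_Icc outer_le h₂]
  exact (iUnion₂_subset_iff (t := {s | P s})).symm

end LinearOrderedAddCommMonoid

/-- Soundness of Rule 4 for nested Always operators:
`G_{[ta1,tb1]} G_{[ta2,tb2]} ψ ↔ G_{[ta1+ta2, tb1+tb2]} ψ`. -/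
theorem nested_always_iff (P : ℝ → Prop) (t ta1 tb1 ta2 tb2 : ℝ)
    (hta1 : 0 ≤ ta1) (htab1 : ta1 ≤ tb1) (hta2 : 0 ≤ ta2) (htab2 : ta2 ≤ tb2) :
    (∀ t₁ ∈ Set.Icc (t + ta1) (t + tb1), ∀ t₂ ∈ Set.Icc (t₁ + ta2) (t₁ + tb2), P t₂) ↔
      (∀ s ∈ Set.Icc (t + ta1 + ta2) (t + tb1 + tb2), P s) :=
  nested_always_iff_general P t htab1 htab2
end

section
/- Let P : ℝ → Prop, let t ∈ ℝ, and let 0 ≤ t_{a,1} ≤ t_{b,1} and 0 ≤ t_{a,2} ≤ t_{b,2}. Then (∃ t₁ ∈ [t + t_{a,1}, t + t_{b,1}], ∃ t₂ ∈ [t₁ + t_{a,2}, t₁ + t_{b,2}], P t₂) if and only if (∃ s ∈ [t + t_{a,1} + t_{a,2}, t + t_{b,1} + t_{b,2}], P s). -/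
section NestedWindows

open Set
open scoped Pointwise

theorem exists_mem_biUnion_iff {ι α : Type*} {s : Set ι} {f : ι → Set α} {p : α → Prop} :
    (∃ x ∈ ⋃ i ∈ s, f i, p x) ↔ ∃ i ∈ s, ∃ x ∈ f i, p x := by
  simp only [mem_iUnion₂, exists_prop]
  exact ⟨fun ⟨x, ⟨i, hi, hx⟩, hp⟩ ↦ ⟨i, hi, x, hx, hp⟩,
    fun ⟨i, hi, x, hx, hp⟩ ↦ ⟨x, ⟨i, hi, hx⟩, hp⟩⟩

variable {T : Type*} [AddCommMonoid T] [LinearOrder T] [IsOrderedAddMonoid T] [AddLeftReflectLE T]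
  [ExistsAddOfLE T] {a b c d : T}

theorem biUnion_Icc_add_left (hab : a ≤ b) (hcd : c ≤ d) :
    ⋃ x ∈ Icc a b, Icc (x + c) (x + d) = Icc (a + c) (b + d) :=
  calc ⋃ x ∈ Icc a b, Icc (x + c) (x + d)
    _ = ⋃ x ∈ Icc a b, x +ᵥ Icc c d := by simp only [vadd_Icc]
    _ = Icc a b + Icc c d := iUnion_vadd_set _ _
    _ = Icc (a + c) (b + d) := Icc_add_Icc hab hcd

theorem nested_eventually_iff_general (P : T → Prop) (t : T) (hab : a ≤ b) (hcd : c ≤ d) :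
    (∃ t₁ ∈ Icc (t + a) (t + b), ∃ t₂ ∈ Icc (t₁ + c) (t₁ + d), P t₂) ↔
      ∃ s ∈ Icc (t + a + c) (t + b + d), P s := by
  have htab : t + a ≤ t + b := add_le_add_right hab t
  rw [← biUnion_Icc_add_left htab hcd, exists_mem_biUnion_iff]

end NestedWindows

/-- Soundness of Rule 4 for nested Eventually operators:
`F_{[ta1,tb1]} F_{[ta2,tb2]} ψ ↔ F_{[ta1+ta2, tb1+tb2]} ψ`. -/
theorem nested_eventually_iff (P : ℝ → Prop) (t ta1 tb1 ta2 tb2 : ℝ)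
    (hta1 : 0 ≤ ta1) (htab1 : ta1 ≤ tb1) (hta2 : 0 ≤ ta2) (htab2 : ta2 ≤ tb2) :
    (∃ t₁ ∈ Set.Icc (t + ta1) (t + tb1), ∃ t₂ ∈ Set.Icc (t₁ + ta2) (t₁ + tb2), P t₂) ↔
      (∃ s ∈ Set.Icc (t + ta1 + ta2) (t + tb1 + tb2), P s) :=
  nested_eventually_iff_general P t htab1 htab2
end

section
/- Let P : ℝ → Prop, let t ∈ ℝ, let 0 ≤ t_{a,1} ≤ t_{b,1} and 0 ≤ t_{a,2} < t_{b,2}, and let p_f be a natural number with p_f ≥ 1 and p_f ≥ ⌈(t_{b,1} − t_{a,1}) / (t_{b,2} − t_{a,2})⌉. Let δ₁, …, δ_{p_f} be real numbers with (t_{b,1} − t_{a,1}) / (p_f · (t_{b,2} − t_{a,2})) ≤ δ_i ≤ 1 for each i, and define w₀ = t_{a,1} + t_{a,2} and w_i = w_{i−1} + δ_i · (t_{b,2} − t_{a,2}) for i = 1, …, p_f. If P(t + w_i) holds for every i ∈ {1, …, p_f}, then for every t₁ ∈ [t + t_{a,1}, t + t_{b,1}] there exists t₂ ∈ [t₁ +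 t_{a,2}, t₁ + t_{b,2}] such that P(t₂). -/
/-! A sequence of instants that climbs from below `s` to above `s` must cross `s`: two consecutive
instants satisfy `w i ≤ s ≤ w (i + 1)`. If each step is at most the width `tb2 - ta2` of the inner
window, then `w (i + 1)` lies within that width above `s`; with `s = t₁ - t + ta2` this sample is in
the window of `t₁`. The bound `δ i ≤ 1` keeps the steps below the width. The lower bounds on the
`pf` numbers `δ i` add up to `(tb1 - ta1) / (tb2 - ta2)`, so that the last instant is at least
`w 0 + (tb1 - ta1) = tb1 + ta2`. -/

open Finset

theorem exists_le_and_le_succ_of_le_of_le {α : Type*} [LinearOrder α] {w : ℕ → α} {n : ℕ} {s : α}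
    (hn : 0 < n) (h0 : w 0 ≤ s) (hs : s ≤ w n) : ∃ i < n, w i ≤ s ∧ s ≤ w (i + 1) := by
  induction n, hn using Nat.le_induction with
  | base => exact ⟨0, zero_lt_one, h0, hs⟩
  | succ n _ ih =>
    rcases le_total s (w n) with hsn | hns
    · obtain ⟨i, hi, hcross⟩ := ih hsn
      exact ⟨i, hi.trans n.lt_succ_self, hcross⟩
    · exact ⟨n, n.lt_succ_self, hns, hs⟩

theorem exists_succ_mem_Icc_of_succ_le_add {M : Type*} [Add M] [LinearOrder M] [AddRightMono M]
    {w : ℕ → M} {n : ℕ} {s d : M} (hn : 0 < n) (h0 : w 0 ≤ s) (hs : s ≤ w n)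
    (hstep : ∀ i < n, w (i + 1) ≤ w i + d) : ∃ i < n, w (i + 1) ∈ Set.Icc s (s + d) := by
  obtain ⟨i, hi, hbefore, hafter⟩ := exists_le_and_le_succ_of_le_of_le hn h0 hs
  exact ⟨i, hi, hafter, (hstep i hi).trans (add_le_add_left hbefore d)⟩

theorem eq_add_sum_Icc_mul {R : Type*} [NonUnitalNonAssocSemiring R] {w δ : ℕ → R} {n : ℕ} {L : R}
    (hw : ∀ i < n, w (i + 1) = w i + δ (i + 1) * L) : w n = w 0 + (∑ i ∈ Icc 1 n, δ i) * L := by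
  induction n with
  | zero => simp
  | succ n ih =>
    rw [hw n n.lt_succ_self, ih fun i hi => hw i (hi.trans n.lt_succ_self),
      sum_Icc_succ_top n.succ_pos, add_mul, add_assoc]

theorem div_le_sum_of_forall_div_card_mul_le {ι K : Type*} [Field K] [LinearOrder K]
    [IsStrictOrderedRing K] {s : Finset ι} {δ : ι → K} {T L : K} (hs : s.Nonempty)
    (hδ : ∀ i ∈ s, T / (#s * L) ≤ δ i) : T / L ≤ ∑ i ∈ s, δ i := by
  have hcard : (#s : K) ≠ 0 := Nat.cast_ne_zero.mpr hs.card_ne_zero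
  calc T / L = #s • (T / (#s * L)) := by
        rw [nsmul_eq_mul, ← mul_div_assoc, mul_div_mul_left _ _ hcard]
    _ ≤ ∑ i ∈ s, δ i := card_nsmul_le_sum s δ _ hδ

theorem always_eventually_of_sampled_general {K : Type*} [Field K] [LinearOrder K]
    [IsStrictOrderedRing K] (P : K → Prop) (t ta1 tb1 ta2 tb2 : K) (htab2 : ta2 < tb2)
    (pf : ℕ) (hpf1 : 1 ≤ pf) (δ : ℕ → K) (hδ_le : ∀ i, 1 ≤ i → i ≤ pf → δ i ≤ 1)
    (hδ_sum : (tb1 - ta1) / (tb2 - ta2) ≤ ∑ i ∈ Icc 1 pf, δ i)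
    (w : ℕ → K) (hw0 : w 0 = ta1 + ta2)
    (hw : ∀ i, 1 ≤ i → i ≤ pf → w i = w (i - 1) + δ i * (tb2 - ta2))
    (hP : ∀ i, 1 ≤ i → i ≤ pf → P (t + w i)) :
    ∀ t₁ ∈ Set.Icc (t + ta1) (t + tb1), ∃ t₂ ∈ Set.Icc (t₁ + ta2) (t₁ + tb2), P t₂ := by
  rintro t₁ ⟨hat₁, ht₁b⟩
  have hwidth : 0 < tb2 - ta2 := sub_pos.mpr htab2
  have hw_succ (i : ℕ) (hi : i < pf) : w (i + 1) = w i + δ (i + 1) * (tb2 - ta2) :=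
    hw (i + 1) i.succ_pos hi
  have hstep (i : ℕ) (hi : i < pf) : w (i + 1) ≤ w i + (tb2 - ta2) := by
    rw [hw_succ i hi]
    gcongr
    exact mul_le_of_le_one_left hwidth.le (hδ_le (i + 1) i.succ_pos hi)
  have hlast : tb1 + ta2 ≤ w pf := by
    have htotal : tb1 - ta1 ≤ (∑ i ∈ Icc 1 pf, δ i) * (tb2 - ta2) :=
      (div_le_iff₀ hwidth).mp hδ_sum
    rw [eq_add_sum_Icc_mul hw_succ, hw0]
    linarith
  obtain ⟨i, hi, hlower, hupper⟩ := exists_succ_mem_Icc_of_succ_le_add (s := t₁ - t + ta2) hpf1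
    (by linarith) (by linarith) hstep
  exact ⟨t + w (i + 1), ⟨by linarith, by linarith⟩, hP (i + 1) i.succ_pos hi⟩

/-- Proposition 6 (soundness of Rule 5): satisfying the conjunction
`⋀_{i=1}^{p_f} F_{[w_i,w_i]} ψ`, where the sampling instants `w_i` are built
from admissible step sizes `δ_i`, implies satisfying
`G_{[ta1,tb1]} F_{[ta2,tb2]} ψ`. -/
theorem always_eventually_of_sampled (P : ℝ → Prop) (t ta1 tb1 ta2 tb2 : ℝ)
    (hta1 : 0 ≤ ta1) (htab1 : ta1 ≤ tb1) (hta2 : 0 ≤ ta2) (htab2 : ta2 < tb2)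
    (pf : ℕ) (hpf1 : 1 ≤ pf)
    (hpf : ⌈(tb1 - ta1) / (tb2 - ta2)⌉ ≤ (pf : ℤ))
    (δ : ℕ → ℝ)
    (hδ : ∀ i, 1 ≤ i → i ≤ pf →
      (tb1 - ta1) / (pf * (tb2 - ta2)) ≤ δ i ∧ δ i ≤ 1)
    (w : ℕ → ℝ) (hw0 : w 0 = ta1 + ta2)
    (hw : ∀ i, 1 ≤ i → i ≤ pf → w i = w (i - 1) + δ i * (tb2 - ta2))
    (hP : ∀ i, 1 ≤ i → i ≤ pf → P (t + w i)) :
    ∀ t₁ ∈ Set.Icc (t + ta1) (t + tb1),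
      ∃ t₂ ∈ Set.Icc (t₁ + ta2) (t₁ + tb2), P t₂ := by
  have hδ_sum : (tb1 - ta1) / (tb2 - ta2) ≤ ∑ i ∈ Icc 1 pf, δ i :=
    div_le_sum_of_forall_div_card_mul_le (nonempty_Icc.mpr hpf1)
      (by simpa using fun i h1 hi => (hδ i h1 hi).1)
  exact always_eventually_of_sampled_general P t ta1 tb1 ta2 tb2 htab2 pf hpf1 δ
    (fun i h1 hi => (hδ i h1 hi).2) hδ_sum w hw0 hw hP
end

section
/- Let n be a natural number, λ > 1/2 and D ≥ 0 real numbers, d : ℝ → EuclideanSpace ℝ (Fin n) a function with ‖d(t)‖ ≤ D for all t ≥ 0, and let e : ℝ → EuclideanSpace ℝ (Fin n) be differentiable with derivative e'(t) = −λ • e(t) + d(t) for all t ≥ 0 (HasDerivAt). Then for every t ≥ 0, ‖e(t)‖² ≤ (‖e(0)‖² − D²/(2λ − 1)) · Real.exp(−(2λ − 1) t) + D²/(2λ − 1). -/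
/-!
Young's inequality `2⟪e, d⟫ ≤ ‖e‖² + ‖d‖²` turns the error dynamics into the scalar differential
inequality `(‖e‖²)' ≤ -(2λ - 1) ‖e‖² + D²`. By Grönwall's inequality, `‖e‖²` stays below the
solution of the corresponding linear equation with the same initial value.
-/

theorem gronwallBound_neg_of_ne_zero {c : ℝ} (hc : c ≠ 0) (δ ε x : ℝ) :
    gronwallBound δ (-c) ε x = (δ - ε / c) * Real.exp (-c * x) + ε / c := by
  rw [gronwallBound_of_K_ne_0 (neg_ne_zero.2 hc), div_neg]
  ring

section Young

open scoped RealInnerProductSpace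

variable {E : Type*} [SeminormedAddCommGroup E] [InnerProductSpace ℝ E]

theorem two_mul_real_inner_le_norm_sq_add_norm_sq (x y : E) :
    2 * ⟪x, y⟫ ≤ ‖x‖ ^ 2 + ‖y‖ ^ 2 := by
  linarith [norm_sub_sq_real x y, sq_nonneg ‖x - y‖]

theorem two_mul_real_inner_neg_smul_add_le (c : ℝ) (x y : E) :
    2 * ⟪x, -c • x + y⟫ ≤ -(2 * c - 1) * ‖x‖ ^ 2 + ‖y‖ ^ 2 :=
  calc 2 * ⟪x, -c • x + y⟫ = -(2 * c) * ‖x‖ ^ 2 + 2 * ⟪x, y⟫ := by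
        rw [inner_add_right, real_inner_smul_right, real_inner_self_eq_norm_sq]
        ring
    _ ≤ -(2 * c) * ‖x‖ ^ 2 + (‖x‖ ^ 2 + ‖y‖ ^ 2) := by
        gcongr
        exact two_mul_real_inner_le_norm_sq_add_norm_sq x y
    _ = -(2 * c - 1) * ‖x‖ ^ 2 + ‖y‖ ^ 2 := by ring

end Young

section Gronwall

open Set
open scoped RealInnerProductSpace

variable {E : Type*} [NormedAddCommGroup E] [InnerProductSpace ℝ E] {a b : ℝ}

theorem norm_sq_le_gronwallBound_of_inner_deriv_right_le {f f' : ℝ → E} {δ K ε : ℝ}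
    (hf : ContinuousOn f (Icc a b)) (hf' : ∀ t ∈ Ico a b, HasDerivWithinAt f (f' t) (Ici t) t)
    (ha : ‖f a‖ ^ 2 ≤ δ) (bound : ∀ t ∈ Ico a b, 2 * ⟪f t, f' t⟫ ≤ K * ‖f t‖ ^ 2 + ε) :
    ∀ t ∈ Icc a b, ‖f t‖ ^ 2 ≤ gronwallBound δ K ε (t - a) :=
  le_gronwallBound_of_liminf_deriv_right_le (hf.norm.pow 2)
    (fun t ht _ hr ↦ (hf' t ht).norm_sq.liminf_right_slope_le hr) ha bound

theorem estimation_error_sq_bound_general {lam D : ℝ} {d e : ℝ → E}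
    (hd : ∀ t ∈ Ico a b, ‖d t‖ ≤ D) (he : ContinuousOn e (Icc a b))
    (he' : ∀ t ∈ Ico a b, HasDerivWithinAt e (-lam • e t + d t) (Ici t) t) :
    ∀ t ∈ Icc a b, ‖e t‖ ^ 2 ≤ gronwallBound (‖e a‖ ^ 2) (-(2 * lam - 1)) (D ^ 2) (t - a) := by
  refine norm_sq_le_gronwallBound_of_inner_deriv_right_le he he' le_rfl fun t ht ↦ ?_
  calc 2 * ⟪e t, -lam • e t + d t⟫ ≤ -(2 * lam - 1) * ‖e t‖ ^ 2 + ‖d t‖ ^ 2 :=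
        two_mul_real_inner_neg_smul_add_le lam (e t) (d t)
    _ ≤ -(2 * lam - 1) * ‖e t‖ ^ 2 + D ^ 2 := by
        gcongr
        exact hd t ht

end Gronwall

/-- Quantitative version of Proposition 7(i): the estimation error of the
reference model, with dynamics `ė = -λ e + d` and `‖d‖ ≤ D`, satisfies the
exponential squared-norm bound. -/
theorem estimation_error_sq_bound (n : ℕ) (lam D : ℝ) (hlam : 1 / 2 < lam) (hD : 0 ≤ D)
    (d : ℝ → EuclideanSpace ℝ (Fin n)) (hd : ∀ t, 0 ≤ t → ‖d t‖ ≤ D)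
    (e : ℝ → EuclideanSpace ℝ (Fin n))
    (he : ∀ t, 0 ≤ t → HasDerivAt e (-lam • e t + d t) t) :
    ∀ t, 0 ≤ t →
      ‖e t‖ ^ 2 ≤ (‖e 0‖ ^ 2 - D ^ 2 / (2 * lam - 1)) * Real.exp (-(2 * lam - 1) * t)
        + D ^ 2 / (2 * lam - 1) := by
  intro t ht
  have hrate : 2 * lam - 1 ≠ 0 := by linarith
  simpa only [gronwallBound_neg_of_ne_zero hrate, sub_zero] using
    estimation_error_sq_bound_general (fun s hs ↦ hd s hs.1)
      (fun s hs ↦ (he s hs.1).continuousAt.continuousWithinAt)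
      (fun s hs ↦ (he s hs.1).hasDerivWithinAt) t ⟨ht, le_rfl⟩
end

section
/- Let n be a natural number, λ > 1/2 and D ≥ 0 real numbers, d : ℝ → EuclideanSpace ℝ (Fin n) a function with ‖d(t)‖ ≤ D for all t ≥ 0, and let e : ℝ → EuclideanSpace ℝ (Fin n) be differentiable with derivative e'(t) = −λ • e(t) + d(t) for all t ≥ 0 (HasDerivAt). Then e is bounded on [0, ∞), and limsup_{t → ∞} ‖e(t)‖ ≤ D / Real.sqrt(2λ − 1). -/
/-!
The integrating factor `exp (-K * t)` removes the linear part of `f' = K • f + d`: the derivative of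
`exp (-K * t) • f t` is `exp (-K * t) • d t`, of norm at most `D * exp (-K * t)`, so Grönwall's
inequality holds for `‖f‖` at every real rate `K`, also a negative one. For the rate `-λ` the bound
is the convex combination `exp (-λ * t) * ‖e 0‖ + (1 - exp (-λ * t)) * (D / λ)`, which tends
to `D / λ`; and `√(2 * λ - 1) ≤ λ` because `(λ - 1) ^ 2 ≥ 0`.
-/

open Filter
open Set Topology

section Gronwall

variable {E : Type*} [NormedAddCommGroup E] [NormedSpace ℝ E]

theorem norm_le_gronwallBound_of_norm_deriv_right_sub_smul_le {f f' : ℝ → E} {δ K ε a b : ℝ}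
    (hf : ContinuousOn f (Icc a b)) (hf' : ∀ x ∈ Ico a b, HasDerivWithinAt f (f' x) (Ici x) x)
    (ha : ‖f a‖ ≤ δ) (bound : ∀ x ∈ Ico a b, ‖f' x - K • f x‖ ≤ ε) :
    ∀ x ∈ Icc a b, ‖f x‖ ≤ gronwallBound δ K ε (x - a) := by
  intro x hx
  have hexp (t : ℝ) : HasDerivAt (fun t => Real.exp (-K * t)) (Real.exp (-K * t) * -K) t := by
    simpa using ((hasDerivAt_id t).const_mul (-K)).exp
  have hnorm (t : ℝ) (v : E) : ‖Real.exp (-K * t) • v‖ = Real.exp (-K * t) * ‖v‖ :=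
    norm_smul_of_nonneg (Real.exp_nonneg _) v
  have hg (t : ℝ) (ht : t ∈ Ico a b) : HasDerivWithinAt (fun t => Real.exp (-K * t) • f t)
      (Real.exp (-K * t) • (f' t - K • f t)) (Ici t) t :=
    ((hexp t).hasDerivWithinAt.smul (hf' t ht)).congr_deriv (by module)
  have hB (t : ℝ) : HasDerivAt (fun t => Real.exp (-K * t) * gronwallBound δ K ε (t - a))
      (Real.exp (-K * t) * ε) t :=
    ((hexp t).mul (hasDerivAt_gronwallBound_shift δ K ε t a)).congr_deriv (by ring)
  have hle : ‖Real.exp (-K * x) • f x‖ ≤ Real.exp (-K * x) * gronwallBound δ K ε (x - a) := by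
    refine image_norm_le_of_norm_deriv_right_le_deriv_boundary (by fun_prop) hg ?_ hB ?_ hx
    · rw [hnorm, sub_self, gronwallBound_x0]
      gcongr
    · intro t ht
      rw [hnorm]
      gcongr
      exact bound t ht
  rw [hnorm] at hle
  exact le_of_mul_le_mul_left hle (Real.exp_pos _)

theorem gronwallBound_neg_eq_convexCombination {δ lam ε : ℝ} (hlam : lam ≠ 0) (x : ℝ) :
    gronwallBound δ (-lam) ε x =
      Real.exp (-lam * x) * δ + (1 - Real.exp (-lam * x)) * (ε / lam) := by
  rw [gronwallBound_of_K_ne_0 (neg_ne_zero.mpr hlam), div_neg]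
  ring

theorem gronwallBound_neg_le_max {δ lam ε x : ℝ} (hlam : 0 < lam) (hx : 0 ≤ x) :
    gronwallBound δ (-lam) ε x ≤ max δ (ε / lam) := by
  have hexp : Real.exp (-lam * x) ≤ 1 :=
    Real.exp_le_one_iff.mpr (mul_nonpos_of_nonpos_of_nonneg (by linarith) hx)
  rw [gronwallBound_neg_eq_convexCombination hlam.ne']
  exact Convex.combo_le_max _ _ (Real.exp_nonneg _) (sub_nonneg.mpr hexp) (add_sub_cancel _ _)

theorem tendsto_gronwallBound_neg_atTop {lam : ℝ} (hlam : 0 < lam) (δ ε : ℝ) :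
    Tendsto (gronwallBound δ (-lam) ε) atTop (𝓝 (ε / lam)) := by
  have hexp : Tendsto (fun x => Real.exp (-lam * x)) atTop (𝓝 0) :=
    Real.tendsto_exp_atBot.comp (tendsto_id.const_mul_atTop_of_neg (neg_neg_of_pos hlam))
  rw [funext (gronwallBound_neg_eq_convexCombination hlam.ne')]
  simpa using (hexp.mul_const δ).add ((hexp.const_sub 1).mul_const (ε / lam))

theorem norm_le_gronwallBound_of_hasDerivWithinAt_smul_add {K D : ℝ} {d e : ℝ → E}
    (hd : ∀ t, 0 ≤ t → ‖d t‖ ≤ D)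
    (he : ∀ t, 0 ≤ t → HasDerivWithinAt e (K • e t + d t) (Ici 0) t) {t : ℝ} (ht : 0 ≤ t) :
    ‖e t‖ ≤ gronwallBound ‖e 0‖ K D t := by
  have hcont : ContinuousOn e (Icc 0 t) := fun s hs =>
    (he s hs.1).continuousWithinAt.mono Icc_subset_Ici_self
  have hderiv (s : ℝ) (hs : s ∈ Ico 0 t) : HasDerivWithinAt e (K • e s + d s) (Ici s) s :=
    (he s hs.1).mono (Ici_subset_Ici.mpr hs.1)
  simpa using norm_le_gronwallBound_of_norm_deriv_right_sub_smul_le hcont hderiv le_rfl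
    (fun s hs => by simpa using hd s hs.1) t (right_mem_Icc.mpr ht)

theorem estimation_error_bounded_and_limsup_general {lam D : ℝ} (hlam : 0 < lam) {d e : ℝ → E}
    (hd : ∀ t, 0 ≤ t → ‖d t‖ ≤ D)
    (he : ∀ t, 0 ≤ t → HasDerivWithinAt e (-lam • e t + d t) (Ici 0) t) :
    (∀ t, 0 ≤ t → ‖e t‖ ≤ max ‖e 0‖ (D / lam)) ∧
      limsup (fun t => ‖e t‖) atTop ≤ D / lam := by
  have hle (t : ℝ) (ht : 0 ≤ t) : ‖e t‖ ≤ gronwallBound ‖e 0‖ (-lam) D t :=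
    norm_le_gronwallBound_of_hasDerivWithinAt_smul_add hd he ht
  have hlim := tendsto_gronwallBound_neg_atTop hlam ‖e 0‖ D
  refine ⟨fun t ht => (hle t ht).trans (gronwallBound_neg_le_max hlam ht), ?_⟩
  rw [← hlim.limsup_eq]
  exact limsup_le_limsup ((eventually_ge_atTop 0).mono hle)
    (isCoboundedUnder_le_of_le atTop fun t => norm_nonneg (e t)) hlim.isBoundedUnder_le

end Gronwall

theorem sqrt_two_mul_sub_one_le {x : ℝ} (hx : 0 ≤ x) : √(2 * x - 1) ≤ x :=
  Real.sqrt_le_iff.mpr ⟨hx, by linarith [sq_nonneg (x - 1)]⟩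

/-- Proposition 7(i): the estimation error with dynamics `ė = -λ e + d`,
`‖d‖ ≤ D`, remains bounded on `[0, ∞)` and satisfies
`limsup_{t → ∞} ‖e(t)‖ ≤ D / √(2λ - 1)`. -/
theorem estimation_error_bounded_and_limsup (n : ℕ) (lam D : ℝ)
    (hlam : 1 / 2 < lam) (hD : 0 ≤ D)
    (d : ℝ → EuclideanSpace ℝ (Fin n)) (hd : ∀ t, 0 ≤ t → ‖d t‖ ≤ D)
    (e : ℝ → EuclideanSpace ℝ (Fin n))
    (he : ∀ t, 0 ≤ t → HasDerivAt e (-lam • e t + d t) t) :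
    (∃ M : ℝ, ∀ t, 0 ≤ t → ‖e t‖ ≤ M) ∧
      Filter.limsup (fun t => ‖e t‖) atTop ≤ D / Real.sqrt (2 * lam - 1) := by
  have ⟨hbound, hlimsup⟩ := estimation_error_bounded_and_limsup_general (by linarith) hd
    fun t ht => (he t ht).hasDerivWithinAt
  exact ⟨⟨_, hbound⟩, hlimsup.trans (div_le_div_of_nonneg_left hD
    (Real.sqrt_pos.mpr (by linarith)) (sqrt_two_mul_sub_one_le (by linarith)))⟩
end

section
/- Let α : ℝ → ℝ be locally Lipschitz with α(0) = 0, and let h : ℝ → ℝ be a function such that h(0) ≥ 0 and, for every t ≥ 0, h has derivative h'(t) at t (HasDerivAt) with h'(t) ≥ −α(h(t)). Then h(t) ≥ 0 for all t ≥ 0. -/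
/-!
Let `K` be a Lipschitz constant of `α` near `0`. For small `c > 0` the exponential
`B x = c * exp ((|K| + 1) * (x - t))` is a strict upper barrier for `-h` on `[0, t]`: at a point
where `-h = B`, `(-h)' ≤ α (-B) ≤ K * B < B'`. Hence `-h t ≤ B t = c`, and `c` is arbitrarily small.
Since `B` is bounded by `c` on `[0, t]`, the values of `α` away from `0` never enter.
-/

open Set Filter Topology
open scoped NNReal

theorem eventually_norm_le_mul_norm_of_lipschitzOnWith {E F : Type*} [SeminormedAddCommGroup E]
    [SeminormedAddCommGroup F] {f : E → F} {K : ℝ≥0} {s : Set E} (hf : LipschitzOnWith K f s)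
    (hs : s ∈ 𝓝 0) (hf0 : f 0 = 0) : ∀ᶠ y in 𝓝 0, ‖f y‖ ≤ K * ‖y‖ := by
  filter_upwards [hs] with y hy
  simpa only [hf0, sub_zero] using hf.norm_sub_le hy (mem_of_mem_nhds hs)

theorem hasDerivAt_const_mul_exp_mul_sub (c k b x : ℝ) :
    HasDerivAt (fun x => c * Real.exp (k * (x - b))) (k * (c * Real.exp (k * (x - b)))) x :=
  ((((hasDerivAt_id' x).sub_const b).const_mul k).exp.const_mul c).congr_deriv (by ring)

section Comparison

variable {f f' : ℝ → ℝ} {a b K δ : ℝ}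

theorem image_right_le_of_deriv_right_le_mul_self_of_mem_Ioo {c : ℝ}
    (hf : ContinuousOn f (Icc a b)) (hf' : ∀ x ∈ Ico a b, HasDerivWithinAt f (f' x) (Ici x) x)
    (hab : a ≤ b) (ha : f a ≤ 0) (bound : ∀ x ∈ Ico a b, f x ∈ Ioo 0 δ → f' x ≤ K * f x)
    (hc : c ∈ Ioo 0 δ) : f b ≤ c := by
  let B : ℝ → ℝ := fun x => c * Real.exp ((|K| + 1) * (x - b))
  have hB_pos (x : ℝ) : 0 < B x := mul_pos hc.1 (Real.exp_pos _)
  have hB_le {x : ℝ} (hx : x ≤ b) : B x ≤ c :=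
    mul_le_of_le_one_right hc.1.le <| Real.exp_le_one_iff.2 <|
      mul_nonpos_of_nonneg_of_nonpos (by positivity) (sub_nonpos.2 hx)
  have hB_strict : ∀ x ∈ Ico a b, f x = B x → f' x < (|K| + 1) * B x := by
    intro x hx hfx
    have hmem : f x ∈ Ioo 0 δ := hfx ▸ ⟨hB_pos x, (hB_le hx.2.le).trans_lt hc.2⟩
    calc
      f' x ≤ K * B x := hfx ▸ bound x hx hmem
      _ < (|K| + 1) * B x :=
        mul_lt_mul_of_pos_right ((le_abs_self K).trans_lt (lt_add_one _)) (hB_pos x)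
  have hfB : f b ≤ B b :=
    image_le_of_deriv_right_lt_deriv_boundary hf hf' (ha.trans (hB_pos a).le)
      (hasDerivAt_const_mul_exp_mul_sub c (|K| + 1) b) hB_strict (right_mem_Icc.2 hab)
  exact hfB.trans (hB_le le_rfl)

theorem image_right_nonpos_of_deriv_right_le_mul_self_of_mem_Ioo
    (hf : ContinuousOn f (Icc a b)) (hf' : ∀ x ∈ Ico a b, HasDerivWithinAt f (f' x) (Ici x) x)
    (hab : a ≤ b) (hδ : 0 < δ) (ha : f a ≤ 0)
    (bound : ∀ x ∈ Ico a b, f x ∈ Ioo 0 δ → f' x ≤ K * f x) : f b ≤ 0 := by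
  by_contra! hpos
  obtain ⟨c, hc, hc_lt⟩ := exists_between (lt_min hδ hpos)
  obtain ⟨hcδ, hcf⟩ := lt_min_iff.1 hc_lt
  exact hcf.not_ge <|
    image_right_le_of_deriv_right_le_mul_self_of_mem_Ioo hf hf' hab ha bound ⟨hc, hcδ⟩

end Comparison

theorem zcbf_forward_invariance_general {α h h' : ℝ → ℝ} {K a : ℝ}
    (hα : ∀ᶠ y in 𝓝[<] 0, α y ≤ K * |y|) (ha : 0 ≤ h a) (hcont : ContinuousOn h (Ici a))
    (hder : ∀ t, a ≤ t → HasDerivWithinAt h (h' t) (Ici t) t)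
    (hineq : ∀ t, a ≤ t → h t < 0 → -α (h t) ≤ h' t) :
    ∀ t, a ≤ t → 0 ≤ h t := by
  intro t hat
  obtain ⟨l, hl, hαl⟩ := mem_nhdsLT_iff_exists_Ioo_subset.1 hα
  have hbound : ∀ x ∈ Ico a t, -h x ∈ Ioo 0 (-l) → -h' x ≤ K * -h x := by
    intro x hx hhx
    have hneg : h x < 0 := neg_pos.1 hhx.1
    calc
      -h' x ≤ α (h x) := neg_le.1 (hineq x hx.1 hneg)
      _ ≤ K * |h x| := hαl ⟨neg_lt_neg_iff.1 hhx.2, hneg⟩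
      _ = K * -h x := by rw [abs_of_neg hneg]
  exact neg_nonpos.1 <| image_right_nonpos_of_deriv_right_le_mul_self_of_mem_Ioo
    (f := fun x => -h x) (hcont.mono Icc_subset_Ici_self).neg (fun x hx => (hder x hx.1).neg) hat
    (neg_pos.2 hl) (neg_nonpos.2 ha) hbound

/-- Scalar comparison principle underlying Lemma 1 (zeroing CBFs): if
`α` is locally Lipschitz with `α(0) = 0`, `h(0) ≥ 0`, and
`ḣ(t) ≥ -α(h(t))` for all `t ≥ 0`, then `h(t) ≥ 0` for all `t ≥ 0`. -/
theorem zcbf_forward_invariance (α : ℝ → ℝ) (hα : LocallyLipschitz α) (hα0 : α 0 = 0)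
    (h h' : ℝ → ℝ) (hh0 : 0 ≤ h 0)
    (hder : ∀ t, 0 ≤ t → HasDerivAt h (h' t) t)
    (hineq : ∀ t, 0 ≤ t → -α (h t) ≤ h' t) :
    ∀ t, 0 ≤ t → 0 ≤ h t := by
  obtain ⟨K, s, hs, hLip⟩ := hα 0
  have hα_le : ∀ᶠ y in 𝓝 0, α y ≤ K * |y| :=
    (eventually_norm_le_mul_norm_of_lipschitzOnWith hLip hs hα0).mono fun _ => le_of_abs_le
  exact zcbf_forward_invariance_general (hα_le.filter_mono nhdsWithin_le_nhds) hh0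
    (fun t ht => (hder t ht).continuousAt.continuousWithinAt)
    (fun t ht => (hder t ht).hasDerivWithinAt) fun t ht _ => hineq t ht
end
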